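/- Let t, k, n be positive integers with t ≥ 7, 2 ≤ k ≤ ⌊t/2⌋ − 1, and let N = (2^k − 1)·2^{t+1−k}. Suppose 2^t < n < N. Set d = N − n, x = ⌊d / 2^{t+1−k}⌋, and p = ⌊log₂(x+1)⌋ if x > 0 and p = 0 if x = 0. Then the broadcast function satisfies B(n) ≤ (k + 1 − p)·n − (2t − k + 2p + 4)·2^{k−1} + t − k − (p − 2)·2^p. (The bound equals (k+1−p)n − (t − k/2 + p + 2)·2^k + t − k − (p−2)·2^p.) -/

import Mathlib

/-- A broadcast protocol from originator `u` completing in `b` time units: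
a nondecreasing sequence of informed sets `I 0 = {u}`, `I b = univ`, where at each
step every newly informed vertex is called by a distinct previously informed neighbor. -/
def IsBroadcastProtocol {V : Type*} (G : SimpleGraph V) (u : V) (b : ℕ) : Prop :=
  ∃ I : ℕ → Set V,
    I 0 = {u} ∧
    (∀ i, I i ⊆ I (i + 1)) ∧
    I b = Set.univ ∧
    ∀ i, ∃ f : (I (i + 1) \ I i : Set V) → (I i : Set V),
      Function.Injective f ∧ ∀ v, G.Adj (f v) v

/-- The broadcast time `b(u)`: the minimum number of time units needed to broadcast
from `u` to all vertices. -/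
noncomputable def broadcastTime {V : Type*} (G : SimpleGraph V) (u : V) : ℕ :=
  sInf {b | IsBroadcastProtocol G u b}

/-- The broadcast function `B(n)`: the minimum number of edges of a broadcast graph on
`n` vertices, i.e. a connected graph in which every vertex can broadcast within
`⌈log₂ n⌉` time units. -/
noncomputable def broadcastFunction (n : ℕ) : ℕ :=
  sInf {m | ∃ G : SimpleGraph (Fin n), G.Connected ∧ G.edgeSet.ncard = m ∧
    ∀ u, broadcastTime G u ≤ Nat.clog 2 n}

/-!
Take the cube `Finset (Fin (k + 3))` and delete the subcube of the sets disjoint from a fixed set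
`top` of `k - p` coordinates. Hang from each remaining vertex a binomial tree of dimension
`t - 2 - k`, prune these trees until `n` vertices are left, and join every vertex off the cube to
its parent and to the singletons `{j}`, `j ∈ top`.

A root informs the remaining cube dimension by dimension, leaving to the last a coordinate which
it shares with `top`, so that it never has to cross the deleted subcube. A vertex off the cube acts
as the missing root `∅`, whose neighbours in the remaining cube are the singletons `{j}`.
In the other `t - 2 - k` rounds all trees are filled simultaneously. A vertex at depth one saves
an edge: it first calls its own root `r`, which spreads over the half cube of the sets containing
a chosen `i ∈ r ∩ top`, so that the edge to `{i}` can be dropped.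
-/

section Calls

variable {V V' : Type*} {G : SimpleGraph V} {A B C A' B' : Set V} {m n : ℕ}

/-- One round of broadcasting: the informed set grows from `A` to `B`, and `f v` is the vertex
of `A` that calls the newly informed vertex `v`. -/
def CallRound (G : SimpleGraph V) (A B : Set V) : Prop :=
  A ⊆ B ∧ ∃ f : V → V,
    Set.MapsTo f (B \ A) A ∧ Set.InjOn f (B \ A) ∧ ∀ v ∈ B \ A, G.Adj (f v) v

/-- `CanInform G m A B`: once all of `A` is informed, `m` further rounds of calls can bring the
informed set to exactly `B`. -/
inductive CanInform (G : SimpleGraph V) : ℕ → Set V → Set V → Prop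
  | refl (A : Set V) : CanInform G 0 A A
  | head {m : ℕ} {A B C : Set V} :
      CallRound G A B → CanInform G m B C → CanInform G (m + 1) A C

theorem CallRound.refl (A : Set V) : CallRound G A A :=
  ⟨subset_rfl, id, by simp [Set.MapsTo]⟩

theorem CallRound.singleton {u v : V} (h : G.Adj u v) : CallRound G {u} {u, v} := by
  have hnew : ∀ w ∈ ({u, v} : Set V) \ {u}, w = v := fun w hw => hw.1.resolve_left hw.2
  refine ⟨by simp, fun _ => u, fun _ _ => rfl, fun a ha b hb _ => ?_, fun w hw => ?_⟩
  · rw [hnew a ha, hnew b hb]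
  · rwa [hnew w hw]

theorem CallRound.union (h : CallRound G A B) (h' : CallRound G A' B') (hd : Disjoint B B') :
    CallRound G (A ∪ A') (B ∪ B') := by
  classical
  obtain ⟨hAB, f, hf, hfinj, hfadj⟩ := h
  obtain ⟨hAB', f', hf', hfinj', hfadj'⟩ := h'
  have hnew : ∀ v ∈ (B ∪ B') \ (A ∪ A'),
      (v ∈ B \ A ∧ B.piecewise f f' v = f v) ∨ (v ∈ B' \ A' ∧ B.piecewise f f' v = f' v) := by
    rintro v ⟨hv | hv, hvA⟩
    · exact .inl ⟨⟨hv, fun h => hvA (.inl h)⟩, Set.piecewise_eq_of_mem _ _ _ hv⟩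
    · exact .inr ⟨⟨hv, fun h => hvA (.inr h)⟩,
        Set.piecewise_eq_of_notMem _ _ _ (hd.notMem_of_mem_right hv)⟩
  refine ⟨Set.union_subset_union hAB hAB', B.piecewise f f', fun v hv => ?_,
    fun v hv w hw hvw => ?_, fun v hv => ?_⟩
  · obtain ⟨hv, e⟩ | ⟨hv, e⟩ := hnew v hv <;> rw [e]
    exacts [.inl (hf hv), .inr (hf' hv)]
  · obtain ⟨hv, ev⟩ | ⟨hv, ev⟩ := hnew v hv <;> obtain ⟨hw, ew⟩ | ⟨hw, ew⟩ := hnew w hw <;>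
      rw [ev, ew] at hvw
    · exact hfinj hv hw hvw
    · exact (hd.ne_of_mem (hAB (hf hv)) (hAB' (hf' hw)) hvw).elim
    · exact (hd.ne_of_mem (hAB (hf hw)) (hAB' (hf' hv)) hvw.symm).elim
    · exact hfinj' hv hw hvw
  · obtain ⟨hv, e⟩ | ⟨hv, e⟩ := hnew v hv <;> rw [e]
    exacts [hfadj v hv, hfadj' v hv]

theorem CallRound.comap (h : CallRound G A B) (e : V' ↪ V) (hA : A ⊆ Set.range e) :
    CallRound (G.comap e) (e ⁻¹' A) (e ⁻¹' B) := by
  obtain ⟨hAB, f, hf, hfinj, hfadj⟩ := h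
  have hlift : ∀ v, ∃ w, e v ∈ B \ A → e w = f (e v) := fun v => by
    by_cases hv : e v ∈ B \ A
    · obtain ⟨w, hw⟩ := hA (hf hv)
      exact ⟨w, fun _ => hw⟩
    · exact ⟨v, fun h => absurd h hv⟩
  choose g hg using hlift
  refine ⟨Set.preimage_mono hAB, g, fun v hv => ?_, fun v hv w hw hvw => ?_, fun v hv => ?_⟩
  · rw [Set.mem_preimage, hg v hv]
    exact hf hv
  · exact e.injective (hfinj hv hw (by rw [← hg v hv, ← hg w hw, hvw]))
  · rw [SimpleGraph.comap_adj, hg v hv]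
    exact hfadj _ hv

theorem CallRound.canInform (h : CallRound G A B) : CanInform G 1 A B :=
  .head h (.refl B)

namespace CanInform

theorem trans (h : CanInform G m A B) (h' : CanInform G n B C) : CanInform G (m + n) A C := by
  induction h with
  | refl => rwa [zero_add]
  | head hr _ ih => exact Nat.succ_add _ _ ▸ .head hr (ih h')

theorem subset (h : CanInform G m A B) : A ⊆ B := by
  induction h with
  | refl => exact subset_rfl
  | head hr _ ih => exact hr.1.trans ih

theorem union (h : CanInform G m A B) (h' : CanInform G m A' B') (hd : Disjoint B B') :
    CanInform G m (A ∪ A') (B ∪ B') := by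
  induction h generalizing A' with
  | refl => cases h'; exact .refl _
  | head hr h ih =>
    cases h' with
    | head hr' h' => exact .head (hr.union hr' (hd.mono h.subset h'.subset)) (ih h' hd)

theorem comap (h : CanInform G m A B) (e : V' ↪ V) (hB : B ⊆ Set.range e) :
    CanInform (G.comap e) m (e ⁻¹' A) (e ⁻¹' B) := by
  induction h with
  | refl => exact .refl _
  | head hr h ih => exact .head (hr.comap e ((hr.1.trans h.subset).trans hB)) (ih hB)

theorem exists_reachable (h : CanInform G m A B) : ∀ v ∈ B, ∃ u ∈ A, G.Reachable u v := by
  induction h with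
  | refl => exact fun v hv => ⟨v, hv, .rfl⟩
  | @head _ A B _ hr _ ih =>
    obtain ⟨-, f, hf, -, hadj⟩ := hr
    intro v hv
    obtain ⟨w, hw, hwv⟩ := ih v hv
    by_cases hwA : w ∈ A
    · exact ⟨w, hwA, hwv⟩
    · exact ⟨f w, hf ⟨hw, hwA⟩, (hadj w ⟨hw, hwA⟩).reachable.trans hwv⟩

theorem exists_seq (h : CanInform G m A B) :
    ∃ I : ℕ → Set V, I 0 = A ∧ I m = B ∧ ∀ i, CallRound G (I i) (I (i + 1)) := by
  induction h with
  | refl A => exact ⟨fun _ => A, rfl, rfl, fun _ => .refl A⟩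
  | @head _ A _ _ hr _ ih =>
    obtain ⟨I, rfl, hIm, hI⟩ := ih
    refine ⟨fun i => Nat.casesOn i A I, rfl, hIm, fun i => ?_⟩
    cases i with
    | zero => exact hr
    | succ i => exact hI i

theorem isBroadcastProtocol {u : V} (h : CanInform G m {u} Set.univ) :
    IsBroadcastProtocol G u m := by
  obtain ⟨I, hI0, hIm, hI⟩ := h.exists_seq
  refine ⟨I, hI0, fun i => (hI i).1, hIm, fun i => ?_⟩
  obtain ⟨-, f, hf, hfinj, hadj⟩ := hI i
  exact ⟨fun v => ⟨f v, hf v.2⟩,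
    fun v w hvw => Subtype.ext (hfinj v.2 w.2 (congrArg Subtype.val hvw)), fun v => hadj v v.2⟩

theorem of_callRound_insert {ι : Type*} [LinearOrder ι] {F : Finset ι → Set V} (S : Finset ι)
    (h : ∀ c ∈ S, ∀ U : Finset ι, (∀ j ∈ U, j < c) → CallRound G (F U) (F (insert c U))) :
    CanInform G S.card (F ∅) (F S) := by
  induction S using Finset.induction_on_max with
  | empty => exact .refl _
  | insert c S hc ih =>
    rw [Finset.card_insert_of_notMem fun hcS => (hc c hcS).false]
    exact (ih fun d hd => h d (Finset.mem_insert_of_mem hd)).trans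
      (h c (Finset.mem_insert_self c S) S hc).canInform

end CanInform

theorem broadcastFunction_card_le [Finite V] (G : SimpleGraph V) {W : Finset V} {b : ℕ}
    (hW : W.Nonempty) (hb : b ≤ Nat.clog 2 W.card) (h : ∀ u ∈ W, CanInform G b {u} W) :
    broadcastFunction W.card ≤ G.edgeSet.ncard := by
  let e : Fin W.card ↪ V := W.equivFin.symm.toEmbedding.trans (.subtype _)
  have hrange : Set.range e = W := by
    rw [Function.Embedding.coe_trans, Set.range_comp]
    simp
  have hinform : ∀ u, CanInform (G.comap e) b {u} Set.univ := fun u => by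
    have hu : e u ∈ (W : Set V) := hrange ▸ Set.mem_range_self u
    have := (h (e u) hu).comap e hrange.ge
    rwa [← Set.image_singleton, e.injective.preimage_image, ← hrange, Set.preimage_range] at this
  have hconn : (G.comap e).Connected := by
    have : Nonempty (Fin W.card) := ⟨⟨0, hW.card_pos⟩⟩
    refine .mk fun u v => ?_
    obtain ⟨_, rfl, huv⟩ := (hinform u).exists_reachable v trivial
    exact huv
  have hedges : (G.comap e).edgeSet.ncard ≤ G.edgeSet.ncard := by
    refine Set.ncard_le_ncard_of_injOn (Sym2.map e) ?_ (Sym2.map.injective e.injective).injOn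
    rintro ⟨v, w⟩ hvw
    exact hvw
  refine le_trans (Nat.sInf_le ⟨G.comap e, hconn, rfl, fun u => ?_⟩) hedges
  exact (Nat.sInf_le (hinform u).isBroadcastProtocol).trans hb

end Calls

section Cube

open scoped symmDiff

variable {ι κ : Type*} [DecidableEq ι] {top : Finset ι} {G : SimpleGraph (Finset ι × Finset κ)}

/-- A vertex `(r, y)` of the construction is the vertex `y` of the binomial tree hanging from the
vertex `r` of the cube `Finset ι`. The roots are the pairs `(r, ∅)` where `r` meets `top`, so that
the subcube of the sets disjoint from `top` is missing. -/
def IsRoot (top : Finset ι) (v : Finset ι × Finset κ) : Prop :=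
  ¬ Disjoint v.1 top ∧ v.2 = ∅

/-- The graph induced by the cube `Finset ι` on the roots: two roots are adjacent when they differ
in a single coordinate. -/
def cubeGraph (κ : Type*) (top : Finset ι) : SimpleGraph (Finset ι × Finset κ) where
  Adj v w := IsRoot top v ∧ IsRoot top w ∧ ∃ c, w.1 = v.1 ∆ {c}
  symm := ⟨fun _ _ ⟨hv, hw, c, hc⟩ => ⟨hw, hv, c, by simp [hc]⟩⟩
  loopless := ⟨fun _ ⟨_, _, c, hc⟩ => Finset.singleton_ne_empty c (symmDiff_eq_left.1 hc.symm)⟩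

theorem cubeGraph_adj_flip {v : Finset ι × Finset κ} {c : ι} (hv : IsRoot top v)
    (hv' : IsRoot top (v.1 ∆ {c}, v.2)) : (cubeGraph κ top).Adj (v.1 ∆ {c}, v.2) v :=
  ⟨hv', hv, c, by simp⟩

theorem flip_injective (c : ι) :
    Function.Injective fun v : Finset ι × Finset κ => (v.1 ∆ {c}, v.2) :=
  (symmDiff_left_injective {c}).prodMap Function.injective_id

theorem symmDiff_singleton_of_mem {r : Finset ι} {c : ι} (hc : c ∈ r) : r ∆ {c} = r.erase c := by
  rw [symmDiff_of_ge (Finset.singleton_subset_iff.2 hc), Finset.sdiff_singleton_eq_erase]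

theorem CallRound.of_flip {A B : Set (Finset ι × Finset κ)} (c : ι) (hAB : A ⊆ B)
    (hG : cubeGraph κ top ≤ G) (hB : ∀ v ∈ B, IsRoot top v)
    (h : ∀ v ∈ B \ A, (v.1 ∆ {c}, v.2) ∈ A) : CallRound G A B :=
  ⟨hAB, fun v => (v.1 ∆ {c}, v.2), h, (flip_injective c).injOn,
    fun v hv => hG (cubeGraph_adj_flip (hB v hv.1) (hB _ (hAB (h v hv))))⟩

end Cube

section Roots

open scoped symmDiff

variable {ι κ : Type*} [LinearOrder ι] {top : Finset ι} {G : SimpleGraph (Finset ι × Finset κ)}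

theorem canInform_half_cube [Fintype ι] (hG : cubeGraph κ top ≤ G) {i : ι} {r : Finset ι}
    (hir : i ∈ r) (hi : i ∈ top) :
    CanInform G (Fintype.card ι - 1) {(r, ∅)} {v | IsRoot top v ∧ i ∈ v.1} := by
  have hspread := CanInform.of_callRound_insert (G := G)
    (F := fun U => {v | IsRoot top v ∧ i ∈ v.1 ∧ v.1 ∆ r ⊆ U}) (Finset.univ.erase i)
    fun c hc U _ => by
      refine .of_flip c (fun v hv => ⟨hv.1, hv.2.1, hv.2.2.trans (Finset.subset_insert c U)⟩) hG
        (fun v hv => hv.1) ?_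
      rintro v ⟨⟨hv, hiv, hU⟩, hnew⟩
      have hcv : c ∈ v.1 ∆ r := by
        by_contra hcv
        exact hnew ⟨hv, hiv, (Finset.subset_insert_iff_of_notMem hcv).1 hU⟩
      have hiv' : i ∈ v.1 ∆ {c} := by
        simp [Finset.mem_symmDiff, hiv, (Finset.ne_of_mem_erase hc).symm]
      refine ⟨⟨Finset.not_disjoint_iff.2 ⟨i, hiv', hi⟩, hv.2⟩, hiv', ?_⟩
      rw [symmDiff_right_comm, symmDiff_singleton_of_mem hcv]
      exact Finset.subset_insert_iff.1 hU
  rw [Finset.card_erase_of_mem (Finset.mem_univ i), Finset.card_univ] at hspread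
  convert hspread using 1
  · ext v
    have hr : ¬ Disjoint r top := Finset.not_disjoint_iff.2 ⟨i, hir, hi⟩
    have heq : v.1 ∆ r = ∅ ↔ v.1 = r := symmDiff_eq_bot
    simp only [Set.mem_singleton_iff, Set.mem_ofPred_eq, Finset.subset_empty, Prod.ext_iff, IsRoot,
      heq]
    grind
  · ext v
    have hi' : i ∈ v.1 → i ∉ v.1 ∆ r := by simp [Finset.mem_symmDiff, hir]
    simp only [Set.mem_ofPred_eq, Finset.subset_erase, Finset.subset_univ, true_and]
    tauto

theorem canInform_roots_of_root [Fintype ι] (hG : cubeGraph κ top ≤ G) {i : ι} {r : Finset ι}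
    (hir : i ∈ r) (hi : i ∈ top) :
    CanInform G (Fintype.card ι) {(r, ∅)} {v | IsRoot top v} := by
  have hlast : CallRound G {v | IsRoot top v ∧ i ∈ v.1} {v | IsRoot top v} := by
    refine .of_flip i (fun v hv => hv.1) hG (fun v hv => hv) ?_
    rintro v ⟨hv, hnew⟩
    have hiv : i ∈ v.1 ∆ {i} := by
      simpa [Finset.mem_symmDiff] using fun hiv => hnew ⟨hv, hiv⟩
    exact ⟨⟨Finset.not_disjoint_iff.2 ⟨i, hiv, hi⟩, hv.2⟩, hiv⟩
  have hcard : Fintype.card ι - 1 + 1 = Fintype.card ι :=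
    Nat.sub_add_cancel (Fintype.card_pos_iff.2 ⟨i⟩)
  exact hcard ▸ (canInform_half_cube hG hir hi).trans hlast.canInform

theorem eq_singleton_or_isRoot_flip (htop : IsLowerSet (top : Set ι))
    {v : Finset ι × Finset κ} (hv : IsRoot top v) {c : ι} (hcv : c ∈ v.1) (hc : ∀ j ∈ v.1, j ≤ c) :
    (c ∈ top ∧ v = ({c}, ∅)) ∨ (v.1.erase c ≠ ∅ ∧ IsRoot top (v.1 ∆ {c}, v.2)) := by
  by_cases hne : v.1.erase c = ∅
  · have hv1 : v.1 = {c} := by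
      rw [← Finset.insert_erase hcv, hne]
      rfl
    exact .inl ⟨by simpa [hv1] using hv.1, Prod.ext hv1 hv.2⟩
  · refine .inr ⟨hne, ?_, hv.2⟩
    obtain ⟨j, hj, hjtop⟩ := Finset.not_disjoint_iff.1 hv.1
    rw [symmDiff_singleton_of_mem hcv, Finset.not_disjoint_iff]
    by_cases hjc : j = c
    · obtain ⟨l, hl⟩ := Finset.nonempty_iff_ne_empty.2 hne
      exact ⟨l, hl, htop (hc l (Finset.mem_of_mem_erase hl)) (hjc ▸ hjtop)⟩
    · exact ⟨j, Finset.mem_erase.2 ⟨hjc, hj⟩, hjtop⟩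

/-- The originator `u` plays the part of the missing root `(∅, ∅)`. -/
theorem CallRound.insert_roots (hG : cubeGraph κ top ≤ G) (htop : IsLowerSet (top : Set ι))
    {u : Finset ι × Finset κ} (hu : ¬ IsRoot top u) {U : Finset ι} {c : ι} (hU : ∀ j ∈ U, j < c)
    (hadj : c ∈ top → G.Adj u ({c}, ∅)) :
    CallRound G (insert u {v | IsRoot top v ∧ v.1 ⊆ U})
      (insert u {v | IsRoot top v ∧ v.1 ⊆ insert c U}) := by
  let f : Finset ι × Finset κ → Finset ι × Finset κ :=
    fun v => if v.1.erase c = ∅ then u else (v.1 ∆ {c}, v.2)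
  have hnew : ∀ v ∈ insert u {v | IsRoot top v ∧ v.1 ⊆ insert c U} \
      insert u {v | IsRoot top v ∧ v.1 ⊆ U}, IsRoot top v ∧
      ((c ∈ top ∧ v = ({c}, ∅) ∧ f v = u) ∨
        (f v = (v.1 ∆ {c}, v.2) ∧ IsRoot top (f v) ∧ (f v).1 ⊆ U)) := by
    rintro v ⟨rfl | ⟨hv, hvU⟩, hvnew⟩
    · exact (hvnew (Set.mem_insert v _)).elim
    have hcv : c ∈ v.1 := by
      by_contra hcv
      exact hvnew (.inr ⟨hv, (Finset.subset_insert_iff_of_notMem hcv).1 hvU⟩)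
    have hmax : ∀ j ∈ v.1, j ≤ c := fun j hj =>
      (Finset.mem_insert.1 (hvU hj)).elim le_of_eq fun hjU => (hU j hjU).le
    refine ⟨hv, ?_⟩
    obtain ⟨hctop, rfl⟩ | ⟨hne, hroot⟩ := eq_singleton_or_isRoot_flip htop hv hcv hmax
    · exact .inl ⟨hctop, rfl, if_pos (by simp)⟩
    · have hf : f v = (v.1 ∆ {c}, v.2) := if_neg hne
      refine .inr ⟨hf, hf ▸ hroot, ?_⟩
      rw [hf, symmDiff_singleton_of_mem hcv]
      exact Finset.subset_insert_iff.1 hvU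
  refine ⟨Set.insert_subset_insert fun v hv => ⟨hv.1, hv.2.trans (Finset.subset_insert c U)⟩, f,
    fun v hv => ?_, fun v hv w hw hvw => ?_, fun v hv => ?_⟩
  · obtain ⟨-, ⟨-, -, hf⟩ | ⟨-, hf⟩⟩ := hnew v hv
    exacts [.inl hf, .inr hf]
  · obtain ⟨-, ⟨-, hv, hfv⟩ | ⟨hfv, hv, -⟩⟩ := hnew v hv <;>
      obtain ⟨-, ⟨-, hw, hfw⟩ | ⟨hfw, hw, -⟩⟩ := hnew w hw
    · exact hv.trans hw.symm
    · exact absurd (hfv ▸ hvw ▸ hw) hu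
    · exact absurd (hfw ▸ hvw ▸ hv) hu
    · exact flip_injective c (hfv.symm.trans (hvw.trans hfw))
  · obtain ⟨hv, ⟨hctop, rfl, hf⟩ | ⟨hf, hroot, -⟩⟩ := hnew v hv
    · exact hf ▸ hadj hctop
    · rw [hf] at hroot ⊢
      exact hG (cubeGraph_adj_flip hv hroot)

theorem canInform_insert_roots (hG : cubeGraph κ top ≤ G) (htop : IsLowerSet (top : Set ι))
    {u : Finset ι × Finset κ} (hu : ¬ IsRoot top u) (S : Finset ι)
    (hadj : ∀ j ∈ S, j ∈ top → G.Adj u ({j}, ∅)) :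
    CanInform G S.card {u} (insert u {v | IsRoot top v ∧ v.1 ⊆ S}) := by
  convert CanInform.of_callRound_insert (F := fun U => insert u {v | IsRoot top v ∧ v.1 ⊆ U}) S
    fun c hc U hU => .insert_roots hG htop hu hU (hadj c hc) using 1
  ext v
  have : IsRoot top v → v.1 ≠ ∅ := fun hv h => hv.1 (h ▸ Finset.disjoint_empty_left top)
  simp only [Set.mem_singleton_iff, Set.mem_insert_iff, Set.mem_ofPred_eq, Finset.subset_empty]
  tauto

end Roots

section Forest

variable {ι κ : Type*} [DecidableEq ι] [LinearOrder κ]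

/-- The parent of the vertex `y` in the binomial tree on `Finset κ` with root `∅`. -/
def eraseMax (y : Finset κ) : Finset κ :=
  y.filter fun j => ∃ l ∈ y, j < l

theorem eraseMax_eq_erase {y : Finset κ} {c : κ} (hc : c ∈ y) (hmax : ∀ j ∈ y, j ≤ c) :
    eraseMax y = y.erase c := by
  ext j
  simp only [eraseMax, Finset.mem_filter, Finset.mem_erase]
  constructor
  · rintro ⟨hj, l, hl, hjl⟩
    exact ⟨(hjl.trans_le (hmax l hl)).ne, hj⟩
  · rintro ⟨hjc, hj⟩
    exact ⟨hj, c, hc, (hmax j hj).lt_of_ne hjc⟩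

theorem eraseMax_ssubset {y : Finset κ} (hy : y ≠ ∅) : eraseMax y ⊂ y := by
  have hy : y.Nonempty := Finset.nonempty_iff_ne_empty.2 hy
  rw [eraseMax_eq_erase (y.max'_mem hy) y.le_max']
  exact Finset.erase_ssubset (y.max'_mem hy)

theorem eraseMax_eq_empty {y : Finset κ} (hy : y.card = 1) : eraseMax y = ∅ := by
  obtain ⟨c, rfl⟩ := Finset.card_eq_one.1 hy
  simp [eraseMax]

/-- The vertex set `W` carries on each root a tree with the same root and at least the depth-one
vertices of the binomial tree. -/
structure IsPrunedForest (top : Finset ι) (W : Finset (Finset ι × Finset κ)) : Prop where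
  not_disjoint : ∀ {v}, v ∈ W → ¬ Disjoint v.1 top
  mem_of_card_le_one : ∀ {r y}, ¬ Disjoint r top → y.card ≤ 1 → (r, y) ∈ W
  mem_eraseMax : ∀ {v}, v ∈ W → v.2 ≠ ∅ → (v.1, eraseMax v.2) ∈ W

/-- The vertices of smaller depth that a vertex `v` off the cube is joined to: its parent
and the singletons of the elements of `top`. At depth one `v` skips the singleton of `i v.1`, which
is an element of `v.1` in all applications: the parent of `v` takes over that part of the cube. -/
def contacts (top : Finset ι) (i : Finset ι → ι) (v : Finset ι × Finset κ) :
    Finset (Finset ι × Finset κ) :=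
  insert (v.1, eraseMax v.2)
    ((if v.2.card = 1 then top.erase (i v.1) else top).image fun j => ({j}, ∅))

/-- The edges joining the vertices of `W` off the cube to their contacts. -/
def contactEdges (top : Finset ι) (i : Finset ι → ι) (W : Finset (Finset ι × Finset κ)) :
    Finset (Sym2 (Finset ι × Finset κ)) :=
  (W.filter (·.2 ≠ ∅)).biUnion fun v => (contacts top i v).image (s(·, v))

/-- The broadcast graph of the construction; for a pruned forest `W` the vertices outside `W` are
isolated. -/
def forestGraph (top : Finset ι) (i : Finset ι → ι) (W : Finset (Finset ι × Finset κ)) :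
    SimpleGraph (Finset ι × Finset κ) :=
  cubeGraph κ top ⊔ .fromEdgeSet (contactEdges top i W)

variable {top : Finset ι} {i : Finset ι → ι} {W : Finset (Finset ι × Finset κ)}
  {u v w : Finset ι × Finset κ}

theorem forestGraph_adj_of_mem_contacts (hv : v ∈ W) (hv2 : v.2 ≠ ∅) (hw : w ∈ contacts top i v) :
    (forestGraph top i W).Adj w v := by
  refine .inr ((SimpleGraph.fromEdgeSet_adj _).2 ⟨?_, ?_⟩)
  · exact Finset.mem_biUnion.2
      ⟨v, Finset.mem_filter.2 ⟨hv, hv2⟩, Finset.mem_image_of_mem _ hw⟩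
  · rintro rfl
    obtain h | h := Finset.mem_insert.1 hw
    · exact (eraseMax_ssubset hv2).ne (congrArg Prod.snd h).symm
    · obtain ⟨j, -, rfl⟩ := Finset.mem_image.1 h
      exact hv2 rfl

theorem forestGraph_adj_singleton (hv : v ∈ W) (hv2 : v.2 ≠ ∅) {j : ι} (hj : j ∈ top)
    (hij : v.2.card = 1 → j ≠ i v.1) : (forestGraph top i W).Adj v ({j}, ∅) := by
  refine (forestGraph_adj_of_mem_contacts hv hv2 (Finset.mem_insert_of_mem
    (Finset.mem_image_of_mem _ ?_))).symm
  split_ifs with h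
  exacts [Finset.mem_erase.2 ⟨hij h, hj⟩, hj]

theorem CallRound.forest (hW : IsPrunedForest top W) {c : κ} {U : Finset κ} (hU : ∀ j ∈ U, j < c) :
    CallRound (forestGraph top i W) (insert u {v | v ∈ W ∧ v.2 ⊆ U})
      (insert u {v | v ∈ W ∧ v.2 ⊆ insert c U}) := by
  have hparent : ∀ v ∈ insert u {v | v ∈ W ∧ v.2 ⊆ insert c U} \ insert u {v | v ∈ W ∧ v.2 ⊆ U},
      v ∈ W ∧ c ∈ v.2 ∧ v.2.erase c ⊆ U ∧ eraseMax v.2 = v.2.erase c := by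
    rintro v ⟨rfl | ⟨hv, hvU⟩, hnew⟩
    · exact (hnew (Set.mem_insert v _)).elim
    have hcv : c ∈ v.2 := by
      by_contra hcv
      exact hnew (.inr ⟨hv, (Finset.subset_insert_iff_of_notMem hcv).1 hvU⟩)
    exact ⟨hv, hcv, Finset.subset_insert_iff.1 hvU, eraseMax_eq_erase hcv fun j hj =>
      (Finset.mem_insert.1 (hvU hj)).elim le_of_eq fun hjU => (hU j hjU).le⟩
  refine ⟨Set.insert_subset_insert fun v hv => ⟨hv.1, hv.2.trans (Finset.subset_insert c U)⟩,
    fun v => (v.1, v.2.erase c), fun v hv => ?_, fun v hv w hw hvw => ?_, fun v hv => ?_⟩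
  · obtain ⟨hvW, hcv, hvU, hmax⟩ := hparent v hv
    have hmem := hW.mem_eraseMax hvW (Finset.ne_empty_of_mem hcv)
    exact .inr ⟨by rwa [hmax] at hmem, hvU⟩
  · obtain ⟨-, hcv, -⟩ := hparent v hv
    obtain ⟨-, hcw, -⟩ := hparent w hw
    obtain ⟨h1, h2⟩ := Prod.ext_iff.1 hvw
    exact Prod.ext h1 (Finset.erase_injOn' c hcv hcw h2)
  · obtain ⟨hvW, hcv, -, hmax⟩ := hparent v hv
    refine forestGraph_adj_of_mem_contacts hvW (Finset.ne_empty_of_mem hcv) ?_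
    exact Finset.mem_insert.2 (.inl (Prod.ext rfl hmax.symm))

theorem canInform_forest_of_roots [Fintype κ] (hW : IsPrunedForest top W) (hu : u ∈ W) :
    CanInform (forestGraph top i W) (Fintype.card κ) (insert u {v | IsRoot top v}) W := by
  rw [← Finset.card_univ]
  convert CanInform.of_callRound_insert (F := fun U => insert u {v | v ∈ W ∧ v.2 ⊆ U})
    Finset.univ fun c _ U hU => .forest hW hU using 1
  · ext v
    simp only [Set.mem_insert_iff, Set.mem_ofPred_eq, Finset.subset_empty, IsRoot]
    refine or_congr_right (and_congr_left fun hv2 => ⟨fun hv => ?_, hW.not_disjoint⟩)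
    rw [← Prod.mk.eta (p := v), hv2]
    exact hW.mem_of_card_le_one hv (by simp)
  · simp [Set.insert_eq_of_mem (Finset.mem_coe.2 hu)]

theorem card_contacts_add_le {v : Finset ι × Finset κ} (hi : i v.1 ∈ top) :
    (contacts top i v).card + (if v.2.card = 1 then 1 else 0) ≤ top.card + 1 := by
  have hcard : (if v.2.card = 1 then top.erase (i v.1) else top).card +
      (if v.2.card = 1 then 1 else 0) = top.card := by
    split_ifs
    exacts [Finset.card_erase_add_one hi, rfl]
  have := (Finset.card_insert_le (v.1, eraseMax v.2) _).trans
    (Nat.add_le_add_right (Finset.card_image_le (f := fun j => (({j} : Finset ι), (∅ : Finset κ)))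
      (s := if v.2.card = 1 then top.erase (i v.1) else top)) 1)
  unfold contacts
  omega

theorem card_contactEdges_add_le (hi : ∀ v ∈ W, i v.1 ∈ top) :
    (contactEdges top i W).card + (W.filter fun v => v.2.card = 1).card ≤
      (top.card + 1) * (W.filter (·.2 ≠ ∅)).card := by
  have hone : (W.filter fun v => v.2.card = 1) =
      (W.filter (·.2 ≠ ∅)).filter fun v => v.2.card = 1 := by
    rw [Finset.filter_filter]
    refine Finset.filter_congr fun v _ => (and_iff_right_of_imp fun hv h => ?_).symm
    simp [h] at hv
  rw [hone, Finset.card_filter]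
  calc _ ≤ ∑ v ∈ W with v.2 ≠ ∅, (contacts top i v).card +
        ∑ v ∈ W with v.2 ≠ ∅, (if v.2.card = 1 then 1 else 0) :=
        Nat.add_le_add_right (Finset.card_biUnion_le.trans
          (Finset.sum_le_sum fun v _ => Finset.card_image_le)) _
    _ ≤ (W.filter (·.2 ≠ ∅)).card * (top.card + 1) := by
        rw [← Finset.sum_add_distrib]
        exact Finset.sum_le_card_nsmul _ _ _ fun v hv =>
          card_contacts_add_le (hi v (Finset.mem_filter.1 hv).1)
    _ = _ := mul_comm _ _

end Forest

section Broadcast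

variable {ι κ : Type*} [Fintype ι] [LinearOrder ι] [LinearOrder κ] {top : Finset ι}
  {i : Finset ι → ι} {W : Finset (Finset ι × Finset κ)} {u : Finset ι × Finset κ}

theorem canInform_roots_of_card_eq_one (htop : IsLowerSet (top : Set ι)) (hu : u ∈ W)
    (hu2 : u.2.card = 1) (hi : i u.1 ∈ u.1) (hitop : i u.1 ∈ top) :
    CanInform (forestGraph top i W) (Fintype.card ι) {u} (insert u {v | IsRoot top v}) := by
  have hne : u.2 ≠ ∅ := Finset.card_ne_zero.1 (hu2 ▸ one_ne_zero) |>.ne_empty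
  have hu' : ¬ IsRoot top u := fun h => hne h.2
  have hG : cubeGraph κ top ≤ forestGraph top i W := le_sup_left
  have hcall : CallRound (forestGraph top i W) {u} {u, (u.1, ∅)} := by
    refine .singleton (forestGraph_adj_of_mem_contacts hu hne ?_).symm
    rw [← eraseMax_eq_empty hu2]
    exact Finset.mem_insert_self _ _
  have hrest := canInform_insert_roots hG htop hu' (Finset.univ.erase (i u.1)) fun j hj hjtop =>
    forestGraph_adj_singleton hu hne hjtop fun _ => Finset.ne_of_mem_erase hj
  rw [Finset.card_erase_of_mem (Finset.mem_univ _), Finset.card_univ] at hrest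
  have hboth := hrest.union (canInform_half_cube hG hi hitop) <| by
    rw [Set.disjoint_left]
    rintro v (rfl | hv) ⟨hroot, hiv⟩
    · exact hu' hroot
    · exact Finset.notMem_erase _ _ (hv.2 hiv)
  have hcard : 1 + (Fintype.card ι - 1) = Fintype.card ι :=
    Nat.add_sub_of_le (Fintype.card_pos_iff.2 ⟨i u.1⟩)
  convert hcard ▸ hcall.canInform.trans hboth using 1
  ext v
  simp only [Set.mem_insert_iff, Set.mem_union, Set.mem_ofPred_eq, Finset.subset_erase,
    Finset.subset_univ, true_and]
  tauto

theorem canInform_insert_all_roots (htop : IsLowerSet (top : Set ι)) (hW : IsPrunedForest top W)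
    (hi : ∀ r, ¬ Disjoint r top → i r ∈ r ∧ i r ∈ top) (hu : u ∈ W) :
    CanInform (forestGraph top i W) (Fintype.card ι) {u} (insert u {v | IsRoot top v}) := by
  have hmeet := hW.not_disjoint hu
  obtain ⟨hir, hitop⟩ := hi u.1 hmeet
  by_cases hu2 : u.2 = ∅
  · have hroot : IsRoot top u := ⟨hmeet, hu2⟩
    rw [Set.insert_eq_of_mem (s := {v | IsRoot top v}) hroot, ← Prod.mk.eta (p := u), hu2]
    exact canInform_roots_of_root le_sup_left hir hitop
  by_cases hcard : u.2.card = 1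
  · exact canInform_roots_of_card_eq_one htop hu hcard hir hitop
  · rw [← Finset.card_univ]
    convert canInform_insert_roots (G := forestGraph top i W) le_sup_left htop (fun h => hu2 h.2)
      Finset.univ fun j _ hj => forestGraph_adj_singleton hu hu2 hj fun h => absurd h hcard using 1
    simp

theorem broadcastFunction_card_le_of_isPrunedForest [Fintype κ] (htop : IsLowerSet (top : Set ι))
    (hW : IsPrunedForest top W) (hi : ∀ r, ¬ Disjoint r top → i r ∈ r ∧ i r ∈ top)
    (hne : W.Nonempty) (hb : Fintype.card ι + Fintype.card κ ≤ Nat.clog 2 W.card) :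
    broadcastFunction W.card ≤ (forestGraph top i W).edgeSet.ncard :=
  broadcastFunction_card_le _ hne hb fun _ hu =>
    (canInform_insert_all_roots htop hW hi hu).trans (canInform_forest_of_roots hW hu)

end Broadcast

section Counting

open scoped symmDiff

variable {ι κ : Type*} [Fintype ι] [DecidableEq ι]

theorem two_mul_ncard_edgeSet_cubeGraph_le [Finite κ] (top : Finset ι) :
    2 * (cubeGraph κ top).edgeSet.ncard ≤
      Fintype.card ι * (Finset.univ.filter fun r : Finset ι => ¬ Disjoint r top).card := by
  classical
  cases nonempty_fintype κ
  rw [← SimpleGraph.coe_edgeFinset, Set.ncard_coe_finset,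
    ← SimpleGraph.sum_degrees_eq_twice_card_edges]
  have hroots : (Finset.univ.filter (IsRoot (κ := κ) top)) =
      (Finset.univ.filter fun r : Finset ι => ¬ Disjoint r top) ×ˢ {∅} := by
    ext v
    simp only [IsRoot, Finset.mem_filter, Finset.mem_univ, true_and, Finset.mem_product,
      Finset.mem_singleton]
  have hdeg : ∀ v, (cubeGraph κ top).degree v ≤ Fintype.card ι := fun v => by
    have hsub : (cubeGraph κ top).neighborFinset v ⊆
        Finset.univ.image fun c => (v.1 ∆ {c}, (∅ : Finset κ)) := fun w hw => by
      obtain ⟨-, hw, c, hc⟩ := (SimpleGraph.mem_neighborFinset _ _ _).1 hw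
      exact Finset.mem_image.2 ⟨c, Finset.mem_univ c, Prod.ext hc.symm hw.2.symm⟩
    exact (Finset.card_le_card hsub).trans Finset.card_image_le
  calc ∑ v, (cubeGraph κ top).degree v
      = ∑ v with IsRoot top v, (cubeGraph κ top).degree v := by
        refine (Finset.sum_filter_of_ne fun v _ hv => ?_).symm
        obtain ⟨w, hw⟩ := (SimpleGraph.degree_pos_iff_exists_adj _ _).1 (Nat.pos_of_ne_zero hv)
        exact hw.1
    _ ≤ (Finset.univ.filter (IsRoot (κ := κ) top)).card * Fintype.card ι :=
        Finset.sum_le_card_nsmul _ _ _ fun v _ => hdeg v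
    _ = _ := by rw [hroots, Finset.card_product, Finset.card_singleton, mul_one, mul_comm]

variable [Fintype κ] [LinearOrder κ] {top : Finset ι} {i : Finset ι → ι}
  {W : Finset (Finset ι × Finset κ)}

theorem IsPrunedForest.card_filter_card_snd_eq (hW : IsPrunedForest top W) {m : ℕ} (hm : m ≤ 1) :
    (W.filter fun v => v.2.card = m).card =
      (Finset.univ.filter fun r : Finset ι => ¬ Disjoint r top).card *
        (Fintype.card κ).choose m := by
  rw [← Finset.card_univ, ← Finset.card_powersetCard, ← Finset.card_product]
  congr 1
  ext v
  simp only [Finset.mem_filter, Finset.mem_product, Finset.mem_univ, true_and,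
    Finset.mem_powersetCard_univ]
  exact and_congr_left fun hv => ⟨hW.not_disjoint, fun hr => hW.mem_of_card_le_one hr (hv ▸ hm)⟩

theorem IsPrunedForest.two_mul_ncard_edgeSet_add_le (hW : IsPrunedForest top W)
    (hi : ∀ r, ¬ Disjoint r top → i r ∈ top) {M : ℕ}
    (hM : (Finset.univ.filter fun r : Finset ι => ¬ Disjoint r top).card = M) :
    2 * ((forestGraph top i W).edgeSet.ncard + M * Fintype.card κ) + 2 * (top.card + 1) * M ≤
      2 * (top.card + 1) * W.card + Fintype.card ι * M := by
  have hcube := two_mul_ncard_edgeSet_cubeGraph_le (κ := κ) top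
  have hroots := hW.card_filter_card_snd_eq zero_le_one
  have hone := hW.card_filter_card_snd_eq le_rfl
  have hcontact := card_contactEdges_add_le fun v hv => hi v.1 (hW.not_disjoint hv)
  have hsplit := W.card_filter_add_card_filter_not (·.2 = ∅)
  have hunion : (forestGraph top i W).edgeSet.ncard ≤
      (cubeGraph κ top).edgeSet.ncard + (contactEdges top i W).card := by
    rw [forestGraph, SimpleGraph.edgeSet_sup, SimpleGraph.edgeSet_fromEdgeSet]
    refine (Set.ncard_union_le _ _).trans (Nat.add_le_add_left ?_ _)
    rw [← Set.ncard_coe_finset]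
    exact Set.ncard_le_ncard Set.sdiff_subset
  simp only [Finset.card_eq_zero, Nat.choose_zero_right, Nat.choose_one_right, mul_one, hM]
    at hcube hroots hone
  rw [hone] at hcontact
  rw [hroots] at hsplit
  rw [← hsplit]
  linarith

end Counting

section Existence

theorem exists_card_eq_of_wellFounded {α : Type*} {r : α → α → Prop} (hr : WellFounded r)
    {s t : Finset α} (hst : s ⊆ t) (hs : ∀ a ∈ s, ∀ b, r b a → b ∈ s)
    (ht : ∀ a ∈ t, ∀ b, r b a → b ∈ t) {n : ℕ} (hsn : s.card ≤ n) (hnt : n ≤ t.card) :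
    ∃ W, s ⊆ W ∧ W ⊆ t ∧ (∀ a ∈ W, ∀ b, r b a → b ∈ W) ∧ W.card = n := by
  classical
  induction n, hsn using Nat.le_induction with
  | base => exact ⟨s, subset_rfl, hst, hs, rfl⟩
  | succ n _ ih =>
    obtain ⟨W, hsW, hWt, hW, rfl⟩ := ih (Nat.le_of_succ_le hnt)
    obtain ⟨a, ⟨hat, haW⟩, hmin⟩ := hr.has_min {a | a ∈ t ∧ a ∉ W}
      (Finset.exists_mem_notMem_of_card_lt_card hnt)
    refine ⟨insert a W, hsW.trans (Finset.subset_insert a W),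
      Finset.insert_subset hat hWt, fun b hb c hcb => ?_, Finset.card_insert_of_notMem haW⟩
    obtain rfl | hb := Finset.mem_insert.1 hb
    · refine Finset.mem_insert_of_mem ?_
      by_contra hcW
      exact hmin c ⟨ht b hat c hcb, hcW⟩ hcb
    · exact Finset.mem_insert_of_mem (hW b hb c hcb)

variable {ι κ : Type*} [Fintype ι] [Fintype κ] [DecidableEq ι] [LinearOrder κ]

theorem exists_isPrunedForest_card_eq {top : Finset ι} {M n : ℕ}
    (hM : (Finset.univ.filter fun r : Finset ι => ¬ Disjoint r top).card = M)
    (hMn : M * (Fintype.card κ + 1) ≤ n) (hnM : n ≤ M * 2 ^ Fintype.card κ) :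
    ∃ W : Finset (Finset ι × Finset κ), IsPrunedForest top W ∧ W.card = n := by
  classical
  let R := Finset.univ.filter fun r : Finset ι => ¬ Disjoint r top
  let low := Finset.univ.filter fun y : Finset κ => y.card ≤ 1
  have hlow : low.card = Fintype.card κ + 1 := by
    have : low = Finset.univ.powersetCard 0 ∪ Finset.univ.powersetCard 1 := by
      ext y
      simp [low, Nat.le_one_iff_eq_zero_or_eq_one]
    rw [this, Finset.card_union_of_disjoint (Finset.pairwise_disjoint_powersetCard _ zero_ne_one)]
    simp [add_comm]
  have hwf : WellFounded fun a b : Finset ι × Finset κ => b.2 ≠ ∅ ∧ a = (b.1, eraseMax b.2) :=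
    Subrelation.wf (fun ⟨hb, hab⟩ => hab ▸ eraseMax_ssubset hb)
      (InvImage.wf Prod.snd wellFounded_lt)
  obtain ⟨W, hlowW, hWR, hW, hcard⟩ := exists_card_eq_of_wellFounded (n := n) hwf
    (s := R ×ˢ low) (t := R ×ˢ Finset.univ)
    (Finset.product_subset_product_right (Finset.subset_univ low))
    (by
      rintro v hv _ ⟨hv2, rfl⟩
      simp only [low, Finset.mem_product, Finset.mem_filter, Finset.mem_univ, true_and] at hv ⊢
      exact ⟨hv.1, (Finset.card_le_card (eraseMax_ssubset hv2).1).trans hv.2⟩)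
    (by
      rintro v hv _ ⟨-, rfl⟩
      exact Finset.mem_product.2 ⟨(Finset.mem_product.1 hv).1, Finset.mem_univ _⟩)
    (by rwa [Finset.card_product, hM, hlow])
    (by rwa [Finset.card_product, hM, Finset.card_univ, Fintype.card_finset])
  refine ⟨W, ⟨fun hv => ?_, fun hr hy => hlowW ?_, fun hv hv2 => hW _ hv _ ⟨hv2, rfl⟩⟩, hcard⟩
  · exact (Finset.mem_filter.1 (Finset.mem_product.1 (hWR hv)).1).2
  · simpa [R, low] using ⟨hr, hy⟩

theorem card_filter_not_disjoint_add (top : Finset ι) :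
    (Finset.univ.filter fun r : Finset ι => ¬ Disjoint r top).card +
      2 ^ (Fintype.card ι - top.card) = 2 ^ Fintype.card ι := by
  have : (Finset.univ.filter fun r : Finset ι => Disjoint r top) = topᶜ.powerset := by
    ext r
    simp [Finset.subset_compl_iff_disjoint_right]
  rw [← Finset.card_compl, ← Finset.card_powerset, ← this, add_comm,
    Finset.card_filter_add_card_filter_not, Finset.card_univ, Fintype.card_finset]

theorem two_mul_broadcastFunction_add_le {K q s M n : ℕ} (hq : 0 < q) (hqK : q ≤ K)
    (hM : M + 2 ^ (K - q) = 2 ^ K) (hMn : M * (s + 1) ≤ n) (hnM : n ≤ M * 2 ^ s)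
    (hlog : K + s ≤ Nat.clog 2 n) :
    2 * (broadcastFunction n + M * s) + 2 * (q + 1) * M ≤ 2 * (q + 1) * n + K * M := by
  let top : Finset (Fin K) := Finset.univ.filter fun j => j.val < q
  have htopcard : top.card = q := by simp [top, Fin.card_filter_val_lt, hqK]
  have htop : IsLowerSet (top : Set (Fin K)) := fun a b hba ha => by
    simp only [top, Finset.coe_filter, Finset.mem_univ, true_and, Set.mem_ofPred_eq] at ha ⊢
    exact lt_of_le_of_lt hba ha
  have hroots : (Finset.univ.filter fun r : Finset (Fin K) => ¬ Disjoint r top).card = M := by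
    have := card_filter_not_disjoint_add top
    rw [htopcard, Fintype.card_fin] at this
    omega
  have hpick : ∀ r : Finset (Fin K), ∃ i, ¬ Disjoint r top → i ∈ r ∧ i ∈ top := fun r => by
    by_cases hr : Disjoint r top
    · exact ⟨⟨0, hq.trans_le hqK⟩, fun h => absurd hr h⟩
    · obtain ⟨i, hi⟩ := Finset.not_disjoint_iff.1 hr
      exact ⟨i, fun _ => hi⟩
  choose i hi using hpick
  obtain ⟨W, hW, rfl⟩ := exists_isPrunedForest_card_eq (κ := Fin s) hroots (by simpa) (by simpa)
  have hM0 : 0 < M := by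
    have := Nat.pow_lt_pow_right one_lt_two (Nat.sub_lt (hq.trans_le hqK) hq)
    omega
  have hne : W.Nonempty := Finset.card_pos.1 (hMn.trans_lt' (by positivity))
  have hB := broadcastFunction_card_le_of_isPrunedForest htop hW hi hne (by simpa)
  have hE := hW.two_mul_ncard_edgeSet_add_le (fun r hr => (hi r hr).2) hroots
  simp only [htopcard, Fintype.card_fin] at hE
  linarith

end Existence

section Bound

variable {t k p n : ℕ}

/-- The cube has three dimensions more than `k`: this makes the saving eight times larger, while
the trees, of dimension `t - 2 - k`, can still be pruned without losing a depth-one vertex, each of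
which saves an edge. -/
theorem two_mul_broadcastFunction_le (hkt : k + 5 ≤ t) (hpk : p + 2 ≤ k) (hn : 2 ^ t < n)
    (hn' : n + 2 ^ p * 2 ^ (t + 1 - k) ≤ 2 ^ (t + 1)) :
    2 * (broadcastFunction n : ℤ) ≤
      2 * (k - p + 1) * n - 8 * (2 ^ k - 2 ^ p) * (2 * t - k - 2 * p - 5) := by
  obtain ⟨q, rfl⟩ := Nat.exists_eq_add_of_le (Nat.le_of_add_right_le hpk)
  obtain ⟨s, rfl⟩ := Nat.exists_eq_add_of_le (show p + q + 2 ≤ t by omega)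
  have hq : 0 < q := by omega
  have hpow : 2 ^ p ≤ 2 ^ (p + q) := Nat.pow_le_pow_right two_pos (Nat.le_add_right p q)
  obtain ⟨D, hD⟩ := Nat.exists_eq_add_of_le hpow
  have hM : 8 * D + 2 ^ (p + q + 3 - q) = 2 ^ (p + q + 3) := by
    rw [show p + q + 3 - q = p + 3 by omega, pow_add 2 (p + q) 3, hD, pow_add 2 p 3]
    ring
  have hlow : 8 * D * (s + 1) ≤ n := by
    have hs : s + 1 ≤ 2 ^ (s - 1) := by
      obtain ⟨r, rfl⟩ := Nat.exists_eq_add_of_le (show 3 ≤ s by omega)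
      have := r.lt_two_pow_self
      rw [show 3 + r - 1 = r + 2 by omega, pow_add]
      omega
    calc 8 * D * (s + 1) ≤ 2 ^ (p + q + 3) * 2 ^ (s - 1) :=
          Nat.mul_le_mul (Nat.le_of_add_right_le hM.le) hs
      _ = 2 ^ (p + q + 2 + s) := by rw [← pow_add]; congr 1; omega
      _ ≤ n := hn.le
  have hhigh : n ≤ 8 * D * 2 ^ s := by
    rw [show p + q + 2 + s + 1 - (p + q) = s + 3 by omega,
      show p + q + 2 + s + 1 = p + q + (s + 3) by omega, pow_add 2 (p + q), hD, pow_add 2 s] at hn'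
    linarith
  have hlog : p + q + 3 + s ≤ Nat.clog 2 n := by
    have := (Nat.lt_clog_iff_pow_lt one_lt_two).2 hn
    omega
  have key := two_mul_broadcastFunction_add_le hq (by omega) hM hlow hhigh hlog
  zify at key hD
  push_cast
  rw [hD]
  linarith

theorem claimed_saving_le_saving (hkt : 2 * k + 2 ≤ t) (hpk : p + 2 ≤ k) :
    (2 * t - k + 2 * p + 4 : ℤ) * 2 ^ k ≤
      8 * (2 ^ k - 2 ^ p) * (2 * t - k - 2 * p - 5) + 2 * (t - k) - 2 * (p - 2) * 2 ^ p := by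
  have hpow : (4 : ℤ) * 2 ^ p ≤ 2 ^ k := by
    rw [show (4 : ℤ) = 2 ^ 2 by norm_num, ← pow_add, add_comm]
    exact pow_le_pow_right₀ one_le_two hpk
  zify at hkt hpk
  have hp : (0 : ℤ) ≤ p := p.cast_nonneg
  have hpow0 : (0 : ℤ) ≤ 2 ^ p := by positivity
  have hsaved : (6 * 2 ^ k : ℤ) * (2 * t - k - 2 * p - 5) ≤
      8 * (2 ^ k - 2 ^ p) * (2 * t - k - 2 * p - 5) :=
    mul_le_mul_of_nonneg_right (by linarith) (by linarith)
  have hpp : p * (4 * 2 ^ p : ℤ) ≤ p * 2 ^ k := mul_le_mul_of_nonneg_left hpow hp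
  have hmain : (0 : ℤ) ≤ 2 ^ k * (20 * t - 10 * k - 29 * p - 68) :=
    mul_nonneg (by positivity) (by linarith)
  linarith

end Bound

/-- For `t ≥ 7`, `2 ≤ k ≤ ⌊t/2⌋ - 1`, `N = (2^k - 1)·2^(t+1-k)` and `2^t < n < N`, with
`d = N - n`, `x = ⌊d / 2^(t+1-k)⌋` and `p = ⌊log₂ (x+1)⌋` if `x > 0` (and `p = 0` if `x = 0`),
the broadcast function satisfies
`B(n) ≤ (k+1-p)·n - (2t - k + 2p + 4)·2^(k-1) + t - k - (p-2)·2^p`. -/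
theorem broadcastFunction_le_of_n (t k n N d x p : ℕ) (ht : 7 ≤ t) (hk : 2 ≤ k)
    (hk' : k ≤ t / 2 - 1) (hN : N = (2 ^ k - 1) * 2 ^ (t + 1 - k))
    (hn1 : 2 ^ t < n) (hn2 : n < N)
    (hd : d = N - n) (hx : x = d / 2 ^ (t + 1 - k))
    (hp : p = if 0 < x then Nat.log 2 (x + 1) else 0) :
    (broadcastFunction n : ℤ) ≤
      (k + 1 - p) * n - (2 * t - k + 2 * p + 4) * 2 ^ (k - 1) + t - k - (p - 2) * 2 ^ p := by
  have hpx : 2 ^ p ≤ x + 1 := by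
    rcases x.eq_zero_or_pos with rfl | hx0
    · simp [hp]
    · rw [hp, if_pos hx0]
      exact Nat.pow_log_le_self 2 x.succ_ne_zero
  have hn : n + 2 ^ p * 2 ^ (t + 1 - k) ≤ 2 ^ (t + 1) := by
    have hpow : 2 ^ k * 2 ^ (t + 1 - k) = 2 ^ (t + 1) := by rw [← pow_add]; congr 1; omega
    have hxd : x * 2 ^ (t + 1 - k) ≤ d := hx ▸ Nat.div_mul_le_self d _
    have hpS := Nat.mul_le_mul_right (2 ^ (t + 1 - k)) hpx
    rw [Nat.sub_one_mul, hpow] at hN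
    rw [Nat.succ_mul] at hpS
    omega
  have hpk : p + 2 ≤ k := by
    have : 2 ^ (p + (t + 1 - k)) < 2 ^ t := by rw [pow_add]; omega
    have := (Nat.pow_lt_pow_iff_right one_lt_two).1 this
    omega
  have hbound := two_mul_broadcastFunction_le (by omega) hpk hn1 hn
  have hsaving := claimed_saving_le_saving (show 2 * k + 2 ≤ t by omega) hpk
  rw [← mul_pow_sub_one (show k ≠ 0 by omega) (2 : ℤ)] at hbound hsaving
  linarith
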